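/- Let n and j be positive integers with 4j ≤ 2n + 1, and let M be distributed according to the Haar probability measure on USp(2n,ℂ). Then E[Tr(M^{2j})] = −1 and Var(Tr(M^{2j})) = 2j. -/

import Mathlib

open MeasureTheory ProbabilityTheory Matrix

/-- Matrices over a measurable space of entries carry the product σ-algebra
(the Borel σ-algebra, for matrices over `ℝ` or `ℂ`). -/
instance matrixMeasurableSpace {m n α : Type*} [MeasurableSpace α] :
    MeasurableSpace (Matrix m n α) :=
  inferInstanceAs (MeasurableSpace (m → n → α))

/-- The compact symplectic group `USp(2n,ℂ)`: the `2n × 2n` complex unitary matrices `M`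
with `M * J * Mᵀ = J`, where `J` is the `2n × 2n` block matrix `[[0, I], [−I, 0]]`
(equivalently, `Matrix.symplecticGroup`, whose defining matrix is `−J`; the two
conditions `M * J * Mᵀ = J` and `M * (−J) * Mᵀ = −J` are equivalent),
as a subgroup of the unitary group. -/
def USp (n : ℕ) : Subgroup (Matrix.unitaryGroup (Fin n ⊕ Fin n) ℂ) where
  carrier :=
    {M | (M : Matrix (Fin n ⊕ Fin n) (Fin n ⊕ Fin n) ℂ) ∈ Matrix.symplecticGroup (Fin n) ℂ}
  mul_mem' := by
    intro a b ha hb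
    simp only [Set.mem_setOf_eq, Matrix.UnitaryGroup.mul_val] at *
    exact mul_mem ha hb
  one_mem' := by
    simp only [Set.mem_setOf_eq, Matrix.UnitaryGroup.one_val]
    exact one_mem _
  inv_mem' := by
    intro M hM
    simp only [Set.mem_setOf_eq, Matrix.UnitaryGroup.inv_val] at *
    have h1 : (star (M : Matrix (Fin n ⊕ Fin n) (Fin n ⊕ Fin n) ℂ)) =
        (M : Matrix (Fin n ⊕ Fin n) (Fin n ⊕ Fin n) ℂ)⁻¹ :=
      (Matrix.inv_eq_left_inv (Matrix.UnitaryGroup.star_mul_self M)).symm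
    rw [h1, SymplecticGroup.inv_eq_symplectic_inv _ hM]
    exact mul_mem (mul_mem (SymplecticGroup.neg_mem (SymplecticGroup.J_mem _ _))
      (SymplecticGroup.transpose_mem hM)) (SymplecticGroup.J_mem _ _)

/-- The trace of the `k`-th power (`k : ℤ`, negative powers via the inverse) of an
element of `USp(2n,ℂ)`. -/
noncomputable def trUSp {n : ℕ} (M : USp n) (k : ℤ) : ℂ :=
  Matrix.trace (((M ^ k : USp n) : Matrix.unitaryGroup (Fin n ⊕ Fin n) ℂ) :
    Matrix (Fin n ⊕ Fin n) (Fin n ⊕ Fin n) ℂ)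

/-- The standard normal cumulative distribution function
`Φ(x₀) = (1/√(2π)) ∫_{-∞}^{x₀} e^{-x²/2} dx`. -/
noncomputable def Phi (x₀ : ℝ) : ℝ :=
  (Real.sqrt (2 * Real.pi))⁻¹ * ∫ x in Set.Iic x₀, Real.exp (-x ^ 2 / 2)

/-! Integrating derivatives along one-parameter subgroups gives the loop equations of the Haar
measure: linear relations between the means of products of power traces, with constant terms
depending on parity. Adding the indicator of even exponents to the traces absorbs these constants,
and the relations then involve only Stein defects, the failures `E[X a * R] - a * E[∂R / ∂X a]` of
Gaussian integration by parts. In each loop equation one defect carries the coefficient `2 * n + 1`,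
the others of the same degree `k` have coefficients of total size at most `k - 1`, and the remaining
ones have smaller degree. By induction on the degree and the maximum principle all defects of degree
`k ≤ 2 * n + 1` vanish, so in this range the recentred traces have the moments of independent
centred Gaussians, the `a`-th one having variance `a`. -/

section ParityIndicator

open Finset

/-- The indicator of the even numbers: `-evenIndicator b` is the mean of `Tr (M ^ b)` for
`0 < b ≤ 2 * n + 1`, so it is the amount by which power traces are recentred. -/
noncomputable def evenIndicator (b : ℕ) : ℂ := if Even b then 1 else 0

lemma evenIndicator_congr {b c : ℕ} (h : Even b ↔ Even c) :
    evenIndicator b = evenIndicator c := by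
  simp only [evenIndicator, h]

lemma sum_range_natAbs_sub_two_mul (f : ℕ → ℂ) (a : ℕ) :
    ∑ i ∈ range a, f ((a : ℤ) - 2 * i).natAbs =
      ∑ i ∈ range a, (evenIndicator i * f (a - i) + evenIndicator (a - i) * f i) := by
  induction a using Nat.twoStepInduction with
  | zero => simp
  | one => simp [evenIndicator]
  | more a ih _ =>
    have lhs_step : ∑ i ∈ range (a + 2), f (((a + 2 : ℕ) : ℤ) - 2 * i).natAbs =
        f (a + 2) + ∑ i ∈ range a, f ((a : ℤ) - 2 * i).natAbs + f a := by
      rw [sum_range_succ, sum_range_succ', add_comm (f (a + 2))]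
      congr 1
      · congr 1
        refine sum_congr rfl fun i _ => congrArg f ?_
        omega
      · exact congrArg f (by omega)
    have left_step : ∑ i ∈ range (a + 2), evenIndicator i * f (a + 2 - i) =
        f (a + 2) + ∑ i ∈ range a, evenIndicator i * f (a - i) := by
      rw [sum_range_succ', sum_range_succ', add_comm (f (a + 2))]
      simp [evenIndicator, Nat.even_add]
    have right_step : ∑ i ∈ range (a + 2), evenIndicator (a + 2 - i) * f i =
        ∑ i ∈ range a, evenIndicator (a - i) * f i + f a := by
      rw [sum_range_succ, sum_range_succ]
      have shift : ∀ i ∈ range a,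
          evenIndicator (a + 2 - i) * f i = evenIndicator (a - i) * f i := fun i hi => by
        rw [evenIndicator_congr]
        have := mem_range.mp hi
        grind
      rw [sum_congr rfl shift]
      simp [evenIndicator]
    rw [sum_add_distrib] at ih ⊢
    rw [lhs_step, left_step, right_step, ih]
    ring

lemma sum_range_evenIndicator_mul (a : ℕ) :
    ∑ i ∈ range a, evenIndicator i * evenIndicator (a - i) = a / 2 * evenIndicator a := by
  have parity : ∀ i ∈ range a, evenIndicator ((a : ℤ) - 2 * i).natAbs = evenIndicator a :=
    fun i _ => evenIndicator_congr (by grind)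
  have h := sum_range_natAbs_sub_two_mul evenIndicator a
  rw [sum_congr rfl parity, sum_const, card_range, nsmul_eq_mul] at h
  simp only [mul_comm (evenIndicator (a - _)), ← two_mul, ← mul_sum] at h
  linear_combination -h / 2

lemma sum_range_recentred_mul (p : ℕ → ℂ) (a : ℕ) :
    ∑ i ∈ range a, (p i + evenIndicator i) * (p (a - i) + evenIndicator (a - i)) -
        a / 2 * evenIndicator a =
      ∑ i ∈ range a, (p i * p (a - i) + p ((a : ℤ) - 2 * i).natAbs) := by
  rw [sum_add_distrib, sum_range_natAbs_sub_two_mul, ← sum_range_evenIndicator_mul,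
    ← sum_add_distrib, ← sum_sub_distrib]
  exact sum_congr rfl fun i _ => by ring

end ParityIndicator

section LoopEquations

open Finset MvPolynomial

lemma mkDerivation_eq_sum_pderiv {R σ : Type*} [CommSemiring R] {p : MvPolynomial σ R}
    {t : Finset σ} (ht : p.vars ⊆ t) (f : σ → MvPolynomial σ R) :
    mkDerivation R f p = ∑ b ∈ t, f b * pderiv b p := by
  classical
  have sum_apply : ∀ q, (∑ b ∈ t, f b • pderiv b : Derivation R (MvPolynomial σ R) _) q =
      ∑ b ∈ t, f b * pderiv b q := fun q => by
    rw [← Derivation.coeFnAddMonoidHom_apply, map_sum, Finset.sum_apply]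
    rfl
  rw [← sum_apply]
  refine derivation_eq_of_forall_mem_vars fun b hb => ?_
  simp [sum_apply, pderiv_X, Pi.single_apply, ht hb]

lemma pderiv_comm {R σ : Type*} [CommRing R] (b c : σ) (p : MvPolynomial σ R) :
    pderiv b (pderiv c p) = pderiv c (pderiv b p) := by
  classical
  have commutator_eq_zero : ⁅pderiv (R := R) b, pderiv (R := R) c⁆ = 0 := by
    refine derivation_ext fun i => ?_
    rw [Derivation.commutator_apply, pderiv_X, pderiv_X]
    simp [Pi.single_apply, apply_ite]
  rw [← sub_eq_zero, ← Derivation.commutator_apply, commutator_eq_zero, Derivation.zero_apply]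

/-- The operator for which the loop equations of `USp(2n, ℂ)` read `E[loopOperator a R] = 0`, the
variable `X b` standing for the recentred trace `Tr (M ^ b) + evenIndicator b`. The trace
`Tr (M ^ a)` splits in the first term and merges with a trace occurring in `R` in the second. The
value of the variable `X 0` is the constant `2 * n + 1`. -/
noncomputable def loopOperator (a : ℕ) : MvPolynomial ℕ ℂ →ₗ[ℂ] MvPolynomial ℕ ℂ :=
  LinearMap.mulLeft ℂ (∑ i ∈ range a, X i * X (a - i) - C (a / 2 * evenIndicator a)) +
    (mkDerivation ℂ fun b : ℕ =>
      (b : ℂ) • (X (a + b) - X ((a : ℤ) - (b : ℤ)).natAbs)).toLinearMap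

/-- The failure `E[X a * R] - a * E[∂R / ∂X a]` of the Stein identity that characterises
independent centred Gaussian variables `X a` of variance `a`. -/
noncomputable def steinDefect (E : MvPolynomial ℕ ℂ →ₗ[ℂ] ℂ) (a : ℕ) :
    MvPolynomial ℕ ℂ →ₗ[ℂ] ℂ :=
  E ∘ₗ (LinearMap.mulLeft ℂ (X a) - (a : ℂ) • (pderiv a).toLinearMap)

variable {E : MvPolynomial ℕ ℂ →ₗ[ℂ] ℂ}

lemma steinDefect_apply (a : ℕ) (R : MvPolynomial ℕ ℂ) :
    steinDefect E a R = E (X a * R) - a * E (pderiv a R) := by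
  simp [steinDefect]

lemma map_loopOperator {a K : ℕ} {R : MvPolynomial ℕ ℂ} (hR : R.vars ⊆ range K) :
    E (loopOperator a R) =
      ∑ i ∈ range a, E (X i * X (a - i) * R) - a / 2 * evenIndicator a * E R +
        ∑ b ∈ range K, b * (E (X (a + b) * pderiv b R) -
          E (X ((a : ℤ) - b).natAbs * pderiv b R)) := by
  simp only [loopOperator, LinearMap.add_apply, LinearMap.mulLeft_apply, Derivation.coeFn_coe,
    mkDerivation_eq_sum_pderiv hR, map_add, map_sum, map_sub, sub_mul, sum_mul, smul_mul_assoc,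
    C_mul', map_smul, smul_eq_mul]

lemma sum_range_mul_map_X_natAbs_mul_pderiv {a K : ℕ} {R : MvPolynomial ℕ ℂ}
    (hR : R.vars ⊆ range K) :
    ∑ b ∈ range K, (b : ℂ) * E (X ((a : ℤ) - b).natAbs * pderiv b R) =
      ∑ i ∈ range a, i * E (X (a - i) * pderiv i R) +
        ∑ c ∈ range K, (a + c : ℕ) * E (X c * pderiv (a + c) R) := by
  have extend : ∑ b ∈ range K, (b : ℂ) * E (X ((a : ℤ) - b).natAbs * pderiv b R) =
      ∑ b ∈ range (a + K), (b : ℂ) * E (X ((a : ℤ) - b).natAbs * pderiv b R) :=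
    sum_subset (range_mono (by omega)) fun b _ hb => by
      simp [pderiv_eq_zero_of_notMem_vars fun h => hb (hR h)]
  rw [extend, sum_range_add]
  congr 1
  · refine sum_congr rfl fun i hi => ?_
    have := mem_range.mp hi
    rw [show ((a : ℤ) - i).natAbs = a - i by omega]
  · refine sum_congr rfl fun c _ => ?_
    rw [show ((a : ℤ) - (a + c : ℕ)).natAbs = c by omega]

lemma sum_range_mul_ite_two_mul_eq (a : ℕ) :
    ∑ i ∈ range a, (i : ℂ) * (if a - i = i then 1 else 0) = a / 2 * evenIndicator a := by
  obtain ⟨r, rfl⟩ | ha := Nat.even_or_odd a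
  · obtain rfl | hr := Nat.eq_zero_or_pos r
    · simp
    · rw [sum_eq_single_of_mem r (mem_range.mpr (by omega))]
      · simp [evenIndicator]
      · intro b _ hb
        rw [if_neg (by omega), mul_zero]
  · rw [evenIndicator, if_neg (Nat.not_even_iff_odd.mpr ha), mul_zero]
    refine sum_eq_zero fun i hi => ?_
    rw [if_neg (by grind), mul_zero]

/-- Each loop equation is a linear relation between Stein defects only: the parity constants and
the second-order terms `∂_b ∂_(a + b)` cancel. -/
lemma sum_steinDefect_eq_of_loop {a K : ℕ} {R : MvPolynomial ℕ ℂ}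
    (hloop : E (loopOperator a R) = 0) (hR : R.vars ⊆ range K) :
    ∑ i ∈ range a, steinDefect E i (X (a - i) * R) +
        ∑ b ∈ range K, b * steinDefect E (a + b) (pderiv b R) =
      ∑ c ∈ range K, (a + c : ℕ) * steinDefect E c (pderiv (a + c) R) := by
  have leibniz : ∀ i, E (pderiv i (X (a - i) * R)) =
      (if a - i = i then 1 else 0) * E R + E (X (a - i) * pderiv i R) := fun i => by
    rw [Derivation.leibniz, pderiv_X, add_comm, map_add]
    congr 1
    split_ifs with h
    · simp [h]
    · simp [Pi.single_eq_of_ne h]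
  have split := sum_range_mul_map_X_natAbs_mul_pderiv (E := E) (a := a) hR
  have half := congrArg (· * E R) (sum_range_mul_ite_two_mul_eq a)
  rw [map_loopOperator hR] at hloop
  simp only [sum_mul, mul_assoc] at half
  simp only [steinDefect_apply, leibniz, pderiv_comm (a + _), ← mul_assoc (X _), mul_sub, mul_add,
    sum_sub_distrib, sum_add_distrib] at hloop ⊢
  have second_order : ∑ b ∈ range K, (b : ℂ) * ((a + b : ℕ) * E (pderiv b (pderiv (a + b) R))) =
      ∑ c ∈ range K, (a + c : ℕ) * (c * E (pderiv c (pderiv (a + c) R))) :=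
    sum_congr rfl fun b _ => by ring
  linear_combination hloop + split - half - second_order

lemma mul_steinDefect_of_loop {N : ℂ} (hloop : ∀ a R, E (loopOperator a R) = 0)
    (hzero : ∀ R, E (X 0 * R) = N * E R) {a K : ℕ} (ha : 0 < a) (hK : 0 < K)
    {R : MvPolynomial ℕ ℂ} (hR : R.vars ⊆ range K) :
    N * steinDefect E a R =
      ∑ c ∈ Ico 1 K, (a + c : ℕ) * steinDefect E c (pderiv (a + c) R) -
        ∑ i ∈ Ico 1 a, steinDefect E i (X (a - i) * R) -
        ∑ b ∈ range K, b * steinDefect E (a + b) (pderiv b R) := by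
  have h := sum_steinDefect_eq_of_loop (hloop a R) hR
  rw [sum_range_eq_add_Ico (_ * steinDefect E · _) hK] at h
  have steinDefect_zero : ∀ Q, steinDefect E 0 Q = N * E Q := fun Q => by
    simp [steinDefect_apply, hzero]
  rw [sum_range_eq_add_Ico _ ha, steinDefect_zero, steinDefect_zero, Nat.sub_zero,
    Nat.add_zero] at h
  rw [steinDefect_apply]
  linear_combination h

/-- The pairs `(a, s)` such that `X ^ s` does not involve `X 0` and `X a * X ^ s` has weighted
degree `k`, where `X b` has degree `b`; the Stein identities of total degree `k` are indexed by
them. -/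
def steinIndices (k : ℕ) : Set (ℕ × (ℕ →₀ ℕ)) :=
  {p | 0 < p.1 ∧ p.2 0 = 0 ∧ p.1 + Finsupp.weight id p.2 = k}

lemma finite_steinIndices (k : ℕ) : (steinIndices k).Finite := by
  let bound : ℕ →₀ ℕ := Finsupp.indicator (range (k + 1)) fun _ _ => k
  refine ((Set.finite_Iic k).prod (Set.finite_Iic bound)).subset ?_
  rintro ⟨a, s⟩ ⟨_, hs : s 0 = 0, hk : a + Finsupp.weight id s = k⟩
  refine ⟨by simp only [Set.mem_Iic]; omega, fun b => ?_⟩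
  obtain hb | hb := Nat.eq_zero_or_pos (s b)
  · simp [hb]
  have b_ne : b ≠ 0 := fun h => hb.ne' (h ▸ hs)
  have le_weight : s b ≤ Finsupp.weight id s := Finsupp.le_weight id b_ne s
  have index_le : b ≤ Finsupp.weight id s := Finsupp.le_weight_of_ne_zero' id hb.ne'
  have mem : b ∈ range (k + 1) := mem_range.mpr (by omega)
  change s b ≤ bound b
  rw [show bound b = k from Finsupp.indicator_of_mem mem _]
  omega

section Indices

variable {a b i k : ℕ} {s : ℕ →₀ ℕ}

lemma add_single_mem_steinIndices (h : (a, s) ∈ steinIndices k) (hi : i ∈ Ico 1 a) :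
    (i, Finsupp.single (a - i) 1 + s) ∈ steinIndices k := by
  obtain ⟨_, hs, hk⟩ := h
  have := mem_Ico.mp hi
  refine ⟨by omega, ?_, ?_⟩
  · simpa [hs] using Finsupp.single_eq_of_ne (by omega)
  · simp only [map_add, Finsupp.weight_single, id, one_smul] at hk ⊢
    omega

lemma sub_single_mem_steinIndices (h : (a, s) ∈ steinIndices k) (hb : s b ≠ 0) :
    (a + b, s - Finsupp.single b 1) ∈ steinIndices k := by
  obtain ⟨_, hs, hk⟩ := h
  have weight_eq : Finsupp.weight id (s - Finsupp.single b 1) + b = Finsupp.weight id s :=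
    Finsupp.weight_sub_single_add hb
  refine ⟨by grind, by simp [hs], ?_⟩
  grind

lemma sub_single_add_mem_steinIndices (h : (a, s) ∈ steinIndices k) (hb : s (a + b) ≠ 0)
    (hpos : 0 < b) : (b, s - Finsupp.single (a + b) 1) ∈ steinIndices (k - 2 * a) := by
  obtain ⟨_, hs, hk⟩ := sub_single_mem_steinIndices h hb
  exact ⟨hpos, hs, by grind⟩

end Indices

lemma steinDefect_pderiv_monomial (c b : ℕ) (s : ℕ →₀ ℕ) :
    steinDefect E c (pderiv b (monomial s 1)) =
      s b * steinDefect E c (monomial (s - Finsupp.single b 1) 1) := by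
  have scale : monomial (s - Finsupp.single b 1) (s b : ℂ) =
      (s b : ℂ) • monomial (s - Finsupp.single b 1) 1 := by
    rw [smul_monomial, smul_eq_mul, mul_one]
  rw [pderiv_monomial, one_mul, scale, map_smul, smul_eq_mul]

lemma sum_range_mul_eq_weight {s : ℕ →₀ ℕ} {K : ℕ} (hs : s.support ⊆ range K) :
    ∑ b ∈ range K, b * s b = Finsupp.weight id s := by
  rw [Finsupp.weight_apply, Finsupp.sum_of_support_subset s hs _ (by simp)]
  exact sum_congr rfl fun b _ => mul_comm ..

section MaximumPrinciple

variable {N k a K : ℕ} {s : ℕ →₀ ℕ} {B : ℝ}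

lemma norm_sum_Ico_steinDefect_le
    (hB : ∀ a s, (a, s) ∈ steinIndices k → ‖steinDefect E a (monomial s 1)‖ ≤ B)
    (hp : (a, s) ∈ steinIndices k) :
    ‖∑ i ∈ Ico 1 a, steinDefect E i (X (a - i) * monomial s 1)‖ ≤ (a - 1 : ℕ) * B := by
  have term_le : ∀ i ∈ Ico 1 a, ‖steinDefect E i (X (a - i) * monomial s 1)‖ ≤ B := fun i hi => by
    rw [X, monomial_mul, one_mul]
    exact hB _ _ (add_single_mem_steinIndices hp hi)
  simpa only [sum_const, Nat.card_Ico, nsmul_eq_mul] using norm_sum_le_of_le _ term_le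

lemma norm_sum_range_steinDefect_le
    (hB : ∀ a s, (a, s) ∈ steinIndices k → ‖steinDefect E a (monomial s 1)‖ ≤ B)
    (hp : (a, s) ∈ steinIndices k) (hs : s.support ⊆ range K) :
    ‖∑ b ∈ range K, b * steinDefect E (a + b) (pderiv b (monomial s 1))‖ ≤
      (Finsupp.weight id s : ℕ) * B := by
  rw [← sum_range_mul_eq_weight hs, Nat.cast_sum, sum_mul]
  refine norm_sum_le_of_le _ fun b _ => ?_
  rw [steinDefect_pderiv_monomial, ← mul_assoc, norm_mul, ← Nat.cast_mul, Complex.norm_natCast]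
  by_cases hb : s b = 0
  · simp [hb]
  · gcongr
    exact hB _ _ (sub_single_mem_steinIndices hp hb)

lemma sum_Ico_steinDefect_eq_zero
    (lower : ∀ l < k, ∀ a s, (a, s) ∈ steinIndices l → steinDefect E a (monomial s 1) = 0)
    (hp : (a, s) ∈ steinIndices k) :
    ∑ c ∈ Ico 1 K, (a + c : ℕ) * steinDefect E c (pderiv (a + c) (monomial s 1)) = 0 := by
  refine sum_eq_zero fun c hc => ?_
  rw [steinDefect_pderiv_monomial]
  by_cases hs : s (a + c) = 0
  · simp [hs]
  · have mem := sub_single_add_mem_steinIndices hp hs (mem_Ico.mp hc).1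
    obtain ⟨ha : 0 < a, -, hk⟩ := hp
    rw [lower _ (by omega) _ _ mem, mul_zero, mul_zero]

lemma mul_norm_steinDefect_le
    (hloop : ∀ a R, E (loopOperator a R) = 0) (hzero : ∀ R, E (X 0 * R) = N * E R)
    (lower : ∀ l < k, ∀ a s, (a, s) ∈ steinIndices l → steinDefect E a (monomial s 1) = 0)
    (hB : ∀ a s, (a, s) ∈ steinIndices k → ‖steinDefect E a (monomial s 1)‖ ≤ B)
    (hp : (a, s) ∈ steinIndices k) :
    N * ‖steinDefect E a (monomial s 1)‖ ≤ (k - 1 : ℕ) * B := by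
  obtain ⟨ha : 0 < a, -, hk : a + Finsupp.weight id s = k⟩ := id hp
  have support_subset : s.support ⊆ range (Finsupp.weight id s + 1) := fun b hb =>
    mem_range_succ_iff.mpr (Finsupp.le_weight_of_ne_zero' id (Finsupp.mem_support_iff.mp hb))
  have recursion := mul_steinDefect_of_loop hloop hzero ha (Nat.succ_pos _)
    ((vars_monomial (R := ℂ) one_ne_zero).trans_subset support_subset)
  rw [sum_Ico_steinDefect_eq_zero lower hp, zero_sub] at recursion
  calc N * ‖steinDefect E a (monomial s 1)‖
      = ‖N * steinDefect E a (monomial s 1)‖ := by rw [norm_mul, Complex.norm_natCast]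
    _ ≤ (a - 1 : ℕ) * B + (Finsupp.weight id s : ℕ) * B := by
        rw [recursion]
        refine norm_sub_le_of_le ?_ (norm_sum_range_steinDefect_le hB hp support_subset)
        rw [norm_neg]
        exact norm_sum_Ico_steinDefect_le hB hp
    _ = (k - 1 : ℕ) * B := by
        rw [← add_mul, ← Nat.cast_add, ← hk, Nat.sub_add_comm ha]

theorem steinDefect_monomial_eq_zero
    (hloop : ∀ a R, E (loopOperator a R) = 0) (hzero : ∀ R, E (X 0 * R) = N * E R) (hk : k ≤ N)
    (hp : (a, s) ∈ steinIndices k) : steinDefect E a (monomial s 1) = 0 := by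
  induction k using Nat.strong_induction_on generalizing a s with
  | _ k ih =>
  obtain ⟨⟨c, t⟩, hmax, isMax⟩ := (finite_steinIndices k).exists_maximalFor
    (fun p => ‖steinDefect E p.1 (monomial p.2 1)‖) _ ⟨_, hp⟩
  have le_max : ∀ b u, (b, u) ∈ steinIndices k →
      ‖steinDefect E b (monomial u 1)‖ ≤ ‖steinDefect E c (monomial t 1)‖ :=
    fun b u hbu => not_lt.mp fun hlt => hlt.not_ge (isMax (j := (b, u)) hbu hlt.le)
  have contraction := mul_norm_steinDefect_le hloop hzero
    (fun l hl _ _ => ih l hl (hl.le.trans hk)) le_max hmax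
  have factor_lt : ((k - 1 : ℕ) : ℝ) < N := by
    obtain ⟨hc : 0 < c, -, hdeg : c + Finsupp.weight id t = k⟩ := hmax
    exact_mod_cast (by omega : k - 1 < N)
  have max_nonpos : ‖steinDefect E c (monomial t 1)‖ ≤ 0 := by
    by_contra! hpos
    exact contraction.not_gt (mul_lt_mul_of_pos_right factor_lt hpos)
  exact norm_le_zero_iff.mp ((le_max a s hp).trans max_nonpos)

end MaximumPrinciple

end LoopEquations

section Contraction

open Finset

variable {m R : Type*} [Fintype m] [DecidableEq m] [CommRing R]

lemma mul_single_one_mul_apply (A B : Matrix m m R) (i j p q : m) :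
    (A * single i j (1 : R) * B : Matrix m m R) p q = A p i * B j q := by
  have column : ∀ b ∈ univ, b ≠ i → A p b * (single i j (1 : R) * B : Matrix m m R) b q = 0 :=
    fun b _ hb => by rw [single_mul_apply_of_ne (h := hb), mul_zero]
  rw [Matrix.mul_assoc, mul_apply, sum_eq_single_of_mem i (mem_univ i) column,
    single_mul_apply_same, one_mul]

lemma sum_trace_single_mul_mul_single_mul (U V : Matrix m m R) :
    ∑ x, ∑ y, (single x y 1 * (V * single y x 1 * U)).trace = U.trace * V.trace := by
  simp only [trace_single_mul, one_smul, mul_single_one_mul_apply]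
  simp only [trace, diag_apply, sum_mul_sum, mul_comm]

lemma sum_trace_single_mul_mul_single_mul_eq_trace_mul_transpose (U V : Matrix m m R) :
    ∑ x, ∑ y, (single y x 1 * (V * single y x 1 * U)).trace = (U * Vᵀ).trace := by
  simp only [trace_single_mul, one_smul, mul_single_one_mul_apply]
  simp only [trace, diag_apply, mul_apply, transpose_apply, mul_comm]

lemma sum_trace_single_mul_mul_trace_single_mul (U V : Matrix m m R) :
    ∑ x, ∑ y, (single x y 1 * V).trace * (single y x 1 * U).trace = (U * V).trace := by
  simp only [trace_single_mul, one_smul]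
  simp only [trace, diag_apply, mul_apply, mul_comm]

end Contraction

section SymplecticAdjoint

open Finset

variable {l R : Type*} [Fintype l] [DecidableEq l] [CommRing R]

/-- The adjoint with respect to the symplectic form `J`: the anti-involution whose unitary elements
are the symplectic matrices and whose skew elements form the symplectic Lie algebra. -/
def symplecticAdjoint : Matrix (l ⊕ l) (l ⊕ l) R →ₗ[R] Matrix (l ⊕ l) (l ⊕ l) R :=
  LinearMap.mulLeftRight R (-J l R, J l R) ∘ₗ (transposeLinearEquiv _ _ R R).toLinearMap

lemma symplecticAdjoint_apply (A : Matrix (l ⊕ l) (l ⊕ l) R) :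
    symplecticAdjoint A = -J l R * Aᵀ * J l R := rfl

lemma J_mul_J_mul (A : Matrix (l ⊕ l) (l ⊕ l) R) : J l R * (J l R * A) = -A := by
  rw [← Matrix.mul_assoc, J_squared, neg_one_mul]

lemma symplecticAdjoint_mul (A B : Matrix (l ⊕ l) (l ⊕ l) R) :
    symplecticAdjoint (A * B) = symplecticAdjoint B * symplecticAdjoint A := by
  simp [symplecticAdjoint_apply, transpose_mul, Matrix.mul_assoc, J_mul_J_mul]

lemma symplecticAdjoint_symplecticAdjoint (A : Matrix (l ⊕ l) (l ⊕ l) R) :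
    symplecticAdjoint (symplecticAdjoint A) = A := by
  simp [symplecticAdjoint_apply, transpose_mul, J_transpose, Matrix.mul_assoc, J_mul_J_mul,
    J_squared]

lemma trace_symplecticAdjoint (A : Matrix (l ⊕ l) (l ⊕ l) R) :
    (symplecticAdjoint A).trace = A.trace := by
  rw [symplecticAdjoint_apply, trace_mul_comm, Matrix.neg_mul, Matrix.mul_neg, J_mul_J_mul,
    neg_neg, trace_transpose]

lemma symplecticAdjoint_conjTranspose [StarRing R] (A : Matrix (l ⊕ l) (l ⊕ l) R) :
    symplecticAdjoint Aᴴ = (symplecticAdjoint A)ᴴ := by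
  have conjTranspose_J : (J l R)ᴴ = -J l R := by simp [J, fromBlocks_conjTranspose, fromBlocks_neg]
  have transpose_comm : Aᴴᵀ = Aᵀᴴ := rfl
  simp [symplecticAdjoint_apply, conjTranspose_J, Matrix.mul_assoc, transpose_comm]

lemma mem_symplecticGroup_iff_mul_symplecticAdjoint {A : Matrix (l ⊕ l) (l ⊕ l) R} :
    A ∈ symplecticGroup l R ↔ A * symplecticAdjoint A = 1 := by
  rw [SymplecticGroup.mem_iff, symplecticAdjoint_apply]
  constructor <;> intro h
  · simp [← Matrix.mul_assoc, h, J_squared]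
  · have := congrArg (· * J l R) h
    simpa [Matrix.mul_assoc, J_squared] using this

lemma exp_symplecticAdjoint (A : Matrix (l ⊕ l) (l ⊕ l) ℂ) :
    NormedSpace.exp (symplecticAdjoint A) = symplecticAdjoint (NormedSpace.exp A) := by
  have isUnit_J : IsUnit (J l ℂ) := (isUnit_iff_isUnit_det _).mpr (isUnit_det_J l ℂ)
  rw [symplecticAdjoint_apply, symplecticAdjoint_apply, ← J_inv, exp_conj' _ _ isUnit_J,
    exp_transpose]

/-- Up to a scalar, the tensors `(single x y 1 - symplecticAdjoint (single x y 1)) ⊗ single y x 1`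
add up to the Casimir element of the symplectic Lie algebra. -/
lemma sum_trace_skew_single_mul_mul_single_mul (U V : Matrix (l ⊕ l) (l ⊕ l) R) :
    ∑ x, ∑ y, ((single x y 1 - symplecticAdjoint (single x y 1)) *
        (V * single y x 1 * U)).trace =
      U.trace * V.trace + (U * symplecticAdjoint V).trace := by
  have adjoint_term : ∀ x y, (symplecticAdjoint (single x y 1) * (V * single y x 1 * U)).trace =
      -(single y x 1 * (J l R * V * single y x 1 * (U * J l R))).trace := fun x y => by
    rw [symplecticAdjoint_apply, transpose_single, Matrix.neg_mul, Matrix.neg_mul, Matrix.neg_mul,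
      trace_neg, Matrix.mul_assoc, Matrix.mul_assoc, trace_mul_comm]
    simp only [Matrix.mul_assoc]
  have transposed : (U * J l R * (J l R * V)ᵀ).trace = (U * symplecticAdjoint V).trace := by
    simp [symplecticAdjoint_apply, J_transpose, Matrix.mul_assoc]
  simp only [Matrix.sub_mul, trace_sub, adjoint_term, sub_neg_eq_add, sum_add_distrib,
    sum_trace_single_mul_mul_single_mul,
    sum_trace_single_mul_mul_single_mul_eq_trace_mul_transpose, transposed]

lemma sum_trace_skew_single_mul_mul_trace_single_mul (U V : Matrix (l ⊕ l) (l ⊕ l) R) :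
    ∑ x, ∑ y, ((single x y 1 - symplecticAdjoint (single x y 1)) * V).trace *
        (single y x 1 * U).trace =
      (U * V).trace - (U * symplecticAdjoint V).trace := by
  have adjoint_term : ∀ x y, (symplecticAdjoint (single x y 1) * V).trace =
      (single x y 1 * symplecticAdjoint V).trace := fun x y => by
    rw [← trace_symplecticAdjoint, symplecticAdjoint_mul, symplecticAdjoint_symplecticAdjoint,
      trace_mul_comm]
  simp only [trace_sub, sub_mul, sum_sub_distrib, adjoint_term,
    sum_trace_single_mul_mul_trace_single_mul]

end SymplecticAdjoint

section CompactSymplecticGroup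

instance matrixBorelSpace {m n α : Type*} [Countable m] [Countable n] [TopologicalSpace α]
    [SecondCountableTopology α] [MeasurableSpace α] [BorelSpace α] : BorelSpace (Matrix m n α) :=
  inferInstanceAs (BorelSpace (m → n → α))

namespace USp

variable {n : ℕ}

/-- The inclusion of `USp(2n, ℂ)` in the monoid of all complex matrices. -/
def toMatrix : USp n →* Matrix (Fin n ⊕ Fin n) (Fin n ⊕ Fin n) ℂ :=
  (unitaryGroup (Fin n ⊕ Fin n) ℂ).subtype.comp (USp n).subtype

lemma toMatrix_mul_conjTranspose (M : USp n) : toMatrix M * (toMatrix M)ᴴ = 1 :=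
  mem_unitaryGroup_iff.mp M.1.2

lemma toMatrix_mul_symplecticAdjoint (M : USp n) :
    toMatrix M * symplecticAdjoint (toMatrix M) = 1 :=
  mem_symplecticGroup_iff_mul_symplecticAdjoint.mp M.2

lemma toMatrix_inv (M : USp n) : toMatrix M⁻¹ = symplecticAdjoint (toMatrix M) :=
  left_inv_eq_right_inv (by rw [← map_mul, inv_mul_cancel, map_one])
    (toMatrix_mul_symplecticAdjoint M)

lemma toMatrix_inv_eq_conjTranspose (M : USp n) : toMatrix M⁻¹ = (toMatrix M)ᴴ := rfl

lemma isEmbedding_toMatrix : Topology.IsEmbedding (toMatrix (n := n)) :=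
  Topology.IsEmbedding.subtypeVal.comp Topology.IsEmbedding.subtypeVal

lemma range_toMatrix : Set.range (toMatrix (n := n)) =
    {A | A * Aᴴ = 1} ∩ {A | A * symplecticAdjoint A = 1} := by
  ext A
  refine ⟨?_, fun h => ?_⟩
  · rintro ⟨M, rfl⟩
    exact ⟨toMatrix_mul_conjTranspose M, toMatrix_mul_symplecticAdjoint M⟩
  · exact ⟨⟨⟨A, mem_unitaryGroup_iff.mpr h.1⟩,
      mem_symplecticGroup_iff_mul_symplecticAdjoint.mpr h.2⟩, rfl⟩

lemma isClosedEmbedding_toMatrix : Topology.IsClosedEmbedding (toMatrix (n := n)) := by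
  refine ⟨isEmbedding_toMatrix, ?_⟩
  rw [range_toMatrix]
  simp only [symplecticAdjoint_apply]
  exact (isClosed_eq (by fun_prop) continuous_const).inter
    (isClosed_eq (by fun_prop) continuous_const)

instance compactSpace : CompactSpace (USp n) := by
  have isCompact_box := isCompact_univ_pi fun _ : Fin n ⊕ Fin n =>
    isCompact_univ_pi fun _ : Fin n ⊕ Fin n => isCompact_closedBall (0 : ℂ) 1
  have preimage_box : toMatrix ⁻¹' (Set.univ.pi fun _ => Set.univ.pi fun _ =>
      Metric.closedBall (0 : ℂ) 1) = (Set.univ : Set (USp n)) :=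
    Set.eq_univ_of_forall fun M i _ j _ =>
      mem_closedBall_zero_iff.mpr (entry_norm_bound_of_unitary M.1.2 i j)
  exact ⟨preimage_box ▸ isClosedEmbedding_toMatrix.isCompact_preimage isCompact_box⟩

end USp

section PowerTraces

open USp

variable {n : ℕ} (M : USp n)

lemma trUSp_natCast (k : ℕ) : trUSp M k = (toMatrix M ^ k).trace := by
  rw [← map_pow, ← zpow_natCast]
  rfl

lemma trUSp_neg (k : ℤ) : trUSp M (-k) = trUSp M k := by
  have h := trace_symplecticAdjoint (toMatrix (M ^ k))
  rw [← toMatrix_inv, ← _root_.zpow_neg] at h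
  exact h

lemma trUSp_natAbs (k : ℤ) : trUSp M k.natAbs = trUSp M k := by
  obtain h | h := k.natAbs_eq
  · rw [← h]
  · rw [h, trUSp_neg, Int.natAbs_neg, Int.natAbs_natCast]

lemma trace_toMatrix_pow_mul_symplecticAdjoint (a b : ℕ) :
    (toMatrix M ^ a * symplecticAdjoint (toMatrix M ^ b)).trace =
      (toMatrix M ^ ((a : ℤ) - b).natAbs).trace := by
  rw [← trUSp_natCast, trUSp_natAbs, ← map_pow, ← map_pow, ← toMatrix_inv, ← map_mul,
    ← zpow_natCast, ← zpow_natCast, ← _root_.zpow_sub]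
  rfl

lemma conj_trUSp (k : ℤ) : starRingEnd ℂ (trUSp M k) = trUSp M k := by
  have h := trace_conjTranspose (toMatrix (M ^ k))
  rw [← toMatrix_inv_eq_conjTranspose, ← _root_.zpow_neg] at h
  exact h.symm.trans (trUSp_neg M k)

lemma ofReal_re_trUSp (k : ℤ) : ((trUSp M k).re : ℂ) = trUSp M k :=
  Complex.conj_eq_iff_re.mp (conj_trUSp M k)

end PowerTraces

end CompactSymplecticGroup

section TraceGradient

open Finset

lemma integral_eq_zero_of_hasDerivAt_mul {G E : Type*} [Group G] [TopologicalSpace G]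
    [ContinuousMul G] [CompactSpace G] [MeasurableSpace G] [BorelSpace G]
    [NormedAddCommGroup E] [NormedSpace ℝ E] {μ : Measure G} [IsFiniteMeasure μ]
    [μ.IsMulLeftInvariant] {f f' : G → E} (hf : Continuous f) (hf' : Continuous f') {γ : ℝ → G}
    (hγ : ∀ s t, γ (s + t) = γ s * γ t)
    (hd : ∀ g, HasDerivAt (fun t => f (γ t * g)) (f' g) 0) : ∫ g, f' g ∂μ = 0 := by
  have integrable {φ : G → E} (hφ : Continuous φ) : Integrable φ μ :=
    hφ.integrable_of_hasCompactSupport (HasCompactSupport.of_compactSpace φ)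
  have translate (t : ℝ) {φ : G → E} (hφ : Continuous φ) : Continuous fun g => φ (γ t * g) :=
    hφ.comp (continuous_const_mul _)
  have hasDerivAt_orbit (g : G) (t : ℝ) :
      HasDerivAt (fun s => f (γ s * g)) (f' (γ t * g)) t := by
    have h : HasDerivAt (fun s => f (γ s * (γ t * g))) (f' (γ t * g)) (t - t) := by
      simpa only [sub_self] using hd (γ t * g)
    simpa only [← mul_assoc, ← hγ, sub_add_cancel] using h.comp_sub_const t t
  obtain ⟨C, hC⟩ := isCompact_univ.exists_bound_of_continuousOn hf'.continuousOn
  have under_integral : HasDerivAt (fun t => ∫ g, f (γ t * g) ∂μ) (∫ g, f' (γ 0 * g) ∂μ) 0 :=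
    (hasDerivAt_integral_of_dominated_loc_of_deriv_le (bound := fun _ => C) Filter.univ_mem
      (.of_forall fun t => (integrable (translate t hf)).aestronglyMeasurable)
      (integrable (translate 0 hf)) (integrable (translate 0 hf')).aestronglyMeasurable
      (.of_forall fun _ _ _ => hC _ (Set.mem_univ _)) (integrable_const _)
      (.of_forall fun g t _ => hasDerivAt_orbit g t)).2
  simp only [integral_mul_left_eq_self] at under_integral
  exact under_integral.unique (hasDerivAt_const _ _)

lemma hasDerivAt_mvPolynomial_eval {𝕜 𝔸 σ : Type*} [NontriviallyNormedField 𝕜]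
    [NormedCommRing 𝔸] [NormedAlgebra 𝕜 𝔸] {y : 𝕜 → σ → 𝔸} {y' : σ → 𝔸} {t : 𝕜}
    (hy : ∀ b, HasDerivAt (fun s => y s b) (y' b) t) (p : MvPolynomial σ 𝔸) :
    HasDerivAt (fun s => MvPolynomial.eval (y s) p)
      (∑ b ∈ p.vars, y' b * MvPolynomial.eval (y t) (MvPolynomial.pderiv b p)) t := by
  suffices HasDerivAt (fun s => MvPolynomial.eval (y s) p) (MvPolynomial.eval (y t)
      (MvPolynomial.mkDerivation 𝔸 (fun b => MvPolynomial.C (y' b)) p)) t by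
    simpa [mkDerivation_eq_sum_pderiv Subset.rfl] using this
  induction p using MvPolynomial.induction_on with
  | C r => simpa using hasDerivAt_const t r
  | add p q hp hq => simpa using hp.fun_add hq
  | mul_X p b hp =>
    refine ((hp.mul (hy b)).congr_deriv ?_).congr_of_eventuallyEq (.of_forall fun s => ?_)
    · simp only [Derivation.leibniz, MvPolynomial.mkDerivation_X, smul_eq_mul, map_add, map_mul,
        MvPolynomial.eval_C, MvPolynomial.eval_X]
      ring
    · simp

variable {m : Type*} [Fintype m] [DecidableEq m]

/-- `G` is a gradient of `f` along left translations by one-parameter groups, with respect to the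
trace pairing `(X, Y) ↦ Tr (X * Y)`. -/
def HasTraceGradient (f : Matrix m m ℂ → ℂ) (G : Matrix m m ℂ → Matrix m m ℂ) : Prop :=
  ∀ X A, HasDerivAt (fun t : ℝ => f (NormedSpace.exp (t • X) * A)) (X * G A).trace 0

lemma HasTraceGradient.mul {f g : Matrix m m ℂ → ℂ} {F G : Matrix m m ℂ → Matrix m m ℂ}
    (hf : HasTraceGradient f F) (hg : HasTraceGradient g G) :
    HasTraceGradient (fun A => f A * g A) fun A => g A • F A + f A • G A := fun X A => by
  refine ((hf X A).mul (hg X A)).congr_deriv ?_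
  simp [Matrix.mul_add, trace_add, mul_comm]

open scoped Matrix.Norms.Operator in
lemma hasTraceGradient_trace_mul_pow (B : Matrix m m ℂ) (a : ℕ) :
    HasTraceGradient (fun A => (B * A ^ a).trace)
      fun A => ∑ i ∈ range a, A ^ (a - i) * B * A ^ i := fun X A => by
  have orbit : HasDerivAt (fun t : ℝ => NormedSpace.exp (t • X) * A) (X * A) 0 := by
    have h := hasDerivAt_exp_smul_const (𝕂 := ℝ) X 0
    rw [zero_smul, NormedSpace.exp_zero, one_mul] at h
    exact h.mul_const A
  let traceMul : Matrix m m ℂ →L[ℝ] ℂ := LinearMap.toContinuousLinearMap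
    (traceLinearMap m ℝ ℂ ∘ₗ LinearMap.mulLeft ℝ B)
  refine (traceMul.hasFDerivAt.comp_hasDerivAt (0 : ℝ) (orbit.fun_pow' a)).congr_deriv ?_
  change (B * ∑ i ∈ range a, _).trace = _
  simp only [zero_smul, NormedSpace.exp_zero, one_mul, Matrix.mul_sum, trace_sum]
  rw [← sum_range_reflect]
  refine sum_congr rfl fun i hi => ?_
  have hi := mem_range.mp hi
  rw [Nat.pred_eq_sub_one, show a - 1 - (a - 1 - i) = i by omega,
    show a - i = a - 1 - i + 1 by omega, pow_succ']
  simp only [Matrix.mul_assoc]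
  rw [← Matrix.mul_assoc B, trace_mul_comm]
  simp only [Matrix.mul_assoc]

/-- The power trace `Tr (A ^ b)`, shifted so that it is centred for Haar-distributed `A`. -/
noncomputable def recentredTrace (A : Matrix m m ℂ) (b : ℕ) : ℂ :=
  (A ^ b).trace + evenIndicator b

lemma continuous_recentredTrace : Continuous (recentredTrace (m := m)) :=
  continuous_pi fun b => by
    unfold recentredTrace
    fun_prop

lemma hasTraceGradient_recentredTrace (b : ℕ) :
    HasTraceGradient (m := m) (recentredTrace · b) fun A => (b : ℂ) • A ^ b := fun X A => by
  have h := (hasTraceGradient_trace_mul_pow 1 b X A).add_const (evenIndicator b)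
  refine (h.congr_deriv ?_).congr_of_eventuallyEq (.of_forall fun t => ?_)
  · have term_eq : ∀ i ∈ range b, A ^ (b - i) * 1 * A ^ i = A ^ b := fun i hi => by
      rw [mul_one, ← pow_add, Nat.sub_add_cancel (mem_range.mp hi).le]
    beta_reduce
    rw [sum_congr rfl term_eq, sum_const, card_range, Nat.cast_smul_eq_nsmul]
  · simp [recentredTrace]

lemma hasTraceGradient_eval_recentredTrace (R : MvPolynomial ℕ ℂ) :
    HasTraceGradient (m := m) (fun A => MvPolynomial.eval (recentredTrace A) R) fun A =>
      ∑ b ∈ R.vars, (b * MvPolynomial.eval (recentredTrace A) (MvPolynomial.pderiv b R)) • A ^ b :=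
  fun X A => by
    refine (hasDerivAt_mvPolynomial_eval
      (fun b => hasTraceGradient_recentredTrace b X A) R).congr_deriv ?_
    simp only [zero_smul, NormedSpace.exp_zero, one_mul, Matrix.mul_sum, trace_sum,
      Matrix.mul_smul, trace_smul, smul_eq_mul]
    exact sum_congr rfl fun b _ => by ring

end TraceGradient

section SchwingerDyson

open USp

lemma exp_mul_exp_neg {m : Type*} [Fintype m] [DecidableEq m] (A : Matrix m m ℂ) :
    NormedSpace.exp A * NormedSpace.exp (-A) = 1 := by
  rw [Matrix.exp_neg, mul_nonsing_inv _ ((isUnit_iff_isUnit_det _).mp (isUnit_exp A))]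

lemma exp_smul_mem_unitaryGroup {m : Type*} [Fintype m] [DecidableEq m] {X : Matrix m m ℂ}
    (h_conj : Xᴴ = -X) (t : ℝ) : NormedSpace.exp (t • X) ∈ unitaryGroup m ℂ := by
  rw [mem_unitaryGroup_iff, star_eq_conjTranspose, ← exp_conjTranspose, conjTranspose_smul,
    h_conj, star_trivial, smul_neg, exp_mul_exp_neg]

lemma exp_smul_mem_symplecticGroup {l : Type*} [Fintype l] [DecidableEq l]
    {X : Matrix (l ⊕ l) (l ⊕ l) ℂ} (h_symp : symplecticAdjoint X = -X) (t : ℝ) :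
    NormedSpace.exp (t • X) ∈ symplecticGroup l ℂ := by
  rw [mem_symplecticGroup_iff_mul_symplecticAdjoint, ← exp_symplecticAdjoint,
    LinearMap.map_smul_of_tower, h_symp, smul_neg, exp_mul_exp_neg]

namespace USp

variable {n : ℕ}

/-- The one-parameter subgroup generated by an element of the Lie algebra of `USp(2n, ℂ)`. -/
noncomputable def expOfLie {X : Matrix (Fin n ⊕ Fin n) (Fin n ⊕ Fin n) ℂ} (h_conj : Xᴴ = -X)
    (h_symp : symplecticAdjoint X = -X) (t : ℝ) : USp n :=
  ⟨⟨NormedSpace.exp (t • X), exp_smul_mem_unitaryGroup h_conj t⟩,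
    exp_smul_mem_symplecticGroup h_symp t⟩

lemma toMatrix_expOfLie {X : Matrix (Fin n ⊕ Fin n) (Fin n ⊕ Fin n) ℂ} (h_conj : Xᴴ = -X)
    (h_symp : symplecticAdjoint X = -X) (t : ℝ) :
    toMatrix (expOfLie h_conj h_symp t) = NormedSpace.exp (t • X) := rfl

lemma expOfLie_add {X : Matrix (Fin n ⊕ Fin n) (Fin n ⊕ Fin n) ℂ} (h_conj : Xᴴ = -X)
    (h_symp : symplecticAdjoint X = -X) (s t : ℝ) :
    expOfLie h_conj h_symp (s + t) = expOfLie h_conj h_symp s * expOfLie h_conj h_symp t :=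
  isEmbedding_toMatrix.injective <| by
    rw [map_mul, toMatrix_expOfLie, add_smul]
    exact exp_add_of_commute _ _ (((Commute.refl X).smul_left s).smul_right t)

end USp

variable {n : ℕ} {μ : Measure (USp n)}

lemma integrable_comp_toMatrix [IsFiniteMeasure μ]
    {φ : Matrix (Fin n ⊕ Fin n) (Fin n ⊕ Fin n) ℂ → ℂ} (hφ : Continuous φ) :
    Integrable (fun M => φ (toMatrix M)) μ :=
  (hφ.comp isEmbedding_toMatrix.continuous).integrable_of_hasCompactSupport
    (HasCompactSupport.of_compactSpace _)

variable {f : Matrix (Fin n ⊕ Fin n) (Fin n ⊕ Fin n) ℂ → ℂ}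
  {G : Matrix (Fin n ⊕ Fin n) (Fin n ⊕ Fin n) ℂ → Matrix (Fin n ⊕ Fin n) (Fin n ⊕ Fin n) ℂ}
  {X : Matrix (Fin n ⊕ Fin n) (Fin n ⊕ Fin n) ℂ}

lemma integral_trace_mul_gradient_of_skewHermitian [IsFiniteMeasure μ] [μ.IsMulLeftInvariant]
    (hfG : HasTraceGradient f G) (hf : Continuous f) (hG : Continuous G) (h_conj : Xᴴ = -X)
    (h_symp : symplecticAdjoint X = -X) : ∫ M, (X * G (toMatrix M)).trace ∂μ = 0 := by
  have hφ : Continuous fun A => (X * G A).trace := by fun_prop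
  refine integral_eq_zero_of_hasDerivAt_mul (hf.comp isEmbedding_toMatrix.continuous)
    (hφ.comp isEmbedding_toMatrix.continuous) (expOfLie_add h_conj h_symp) fun M => ?_
  simp only [Function.comp_apply, map_mul, toMatrix_expOfLie]
  exact hfG X (toMatrix M)

lemma integral_trace_mul_gradient_eq_zero [IsFiniteMeasure μ] [μ.IsMulLeftInvariant]
    (hfG : HasTraceGradient f G) (hf : Continuous f) (hG : Continuous G)
    (hX : symplecticAdjoint X = -X) : ∫ M, (X * G (toMatrix M)).trace ∂μ = 0 := by
  have hXH : symplecticAdjoint Xᴴ = -Xᴴ := by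
    rw [symplecticAdjoint_conjTranspose, hX, conjTranspose_neg]
  have re_part : ∫ M, ((X - Xᴴ) * G (toMatrix M)).trace ∂μ = 0 :=
    integral_trace_mul_gradient_of_skewHermitian hfG hf hG (by simp)
      (by rw [map_sub, hX, hXH, neg_sub_neg, neg_sub])
  have im_part : ∫ M, ((Complex.I • (X + Xᴴ)) * G (toMatrix M)).trace ∂μ = 0 :=
    integral_trace_mul_gradient_of_skewHermitian hfG hf hG (by simp [add_comm])
      (by rw [map_smul, map_add, hX, hXH, ← neg_add, smul_neg])
  have decompose : ∀ A, (X * A).trace =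
      1 / 2 * (((X - Xᴴ) * A).trace - Complex.I * ((Complex.I • (X + Xᴴ)) * A).trace) := fun A => by
    simp only [Matrix.sub_mul, Matrix.add_mul, Matrix.smul_mul, trace_add, trace_sub, trace_smul,
      smul_eq_mul]
    linear_combination (1 / 2 * ((X * A).trace + (Xᴴ * A).trace)) * Complex.I_mul_I
  simp only [decompose]
  rw [integral_const_mul, integral_sub, integral_const_mul, re_part, im_part, mul_zero, sub_zero,
    mul_zero]
  · exact integrable_comp_toMatrix (φ := fun A => ((X - Xᴴ) * G A).trace) (by fun_prop)
  · exact (integrable_comp_toMatrix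
      (φ := fun A => ((Complex.I • (X + Xᴴ)) * G A).trace) (by fun_prop)).const_mul _

end SchwingerDyson

section HaarLoopEquations

open Finset MvPolynomial USp

variable {n : ℕ}

lemma eval_loopOperator {y : ℕ → ℂ} (a : ℕ) (R : MvPolynomial ℕ ℂ) :
    eval y (loopOperator a R) =
      (∑ i ∈ range a, y i * y (a - i) - a / 2 * evenIndicator a) * eval y R +
        ∑ b ∈ R.vars, b * (y (a + b) - y ((a : ℤ) - b).natAbs) * eval y (pderiv b R) := by
  simp only [loopOperator, LinearMap.add_apply, LinearMap.mulLeft_apply, Derivation.coeFn_coe,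
    mkDerivation_eq_sum_pderiv Subset.rfl, map_add, map_mul, map_sub, map_sum, smul_eval, eval_X,
    eval_C]

lemma sum_trace_skew_single_mul_sum_pow (M : USp n) (a : ℕ) :
    ∑ x, ∑ y, ((single x y (1 : ℂ) - symplecticAdjoint (single x y 1)) *
        ∑ i ∈ range a, toMatrix M ^ (a - i) * single y x 1 * toMatrix M ^ i).trace =
      ∑ i ∈ range a, recentredTrace (toMatrix M) i * recentredTrace (toMatrix M) (a - i) -
        a / 2 * evenIndicator a := by
  simp only [Matrix.mul_sum, trace_sum]
  rw [sum_comm_cycle]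
  simp only [recentredTrace, sum_range_recentred_mul fun i => (toMatrix M ^ i).trace]
  refine sum_congr rfl fun i hi => ?_
  have := mem_range.mp hi
  rw [sum_trace_skew_single_mul_mul_single_mul, trace_toMatrix_pow_mul_symplecticAdjoint,
    show ((i : ℤ) - (a - i : ℕ)).natAbs = ((a : ℤ) - 2 * i).natAbs by omega]

lemma sum_trace_skew_single_mul_pow_mul_trace (M : USp n) (a b : ℕ) :
    ∑ x, ∑ y, ((single x y (1 : ℂ) - symplecticAdjoint (single x y 1)) * toMatrix M ^ b).trace *
        (single y x 1 * toMatrix M ^ a).trace =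
      recentredTrace (toMatrix M) (a + b) -
        recentredTrace (toMatrix M) ((a : ℤ) - b).natAbs := by
  have same_parity : evenIndicator (a + b) = evenIndicator ((a : ℤ) - b).natAbs :=
    evenIndicator_congr (by grind)
  rw [sum_trace_skew_single_mul_mul_trace_single_mul, ← pow_add,
    trace_toMatrix_pow_mul_symplecticAdjoint, recentredTrace, recentredTrace, same_parity,
    add_sub_add_right_eq_sub]

/-- The gradient of `A ↦ Tr (B * A ^ a) * R`, for a polynomial `R` in the recentred traces. -/
noncomputable def tracePolynomialGradient {m : Type*} [Fintype m] [DecidableEq m]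
    (B : Matrix m m ℂ) (a : ℕ) (R : MvPolynomial ℕ ℂ) (A : Matrix m m ℂ) : Matrix m m ℂ :=
  eval (recentredTrace A) R • ∑ i ∈ range a, A ^ (a - i) * B * A ^ i +
    (B * A ^ a).trace • ∑ b ∈ R.vars, (b * eval (recentredTrace A) (pderiv b R)) • A ^ b

lemma continuous_eval_recentredTrace {m : Type*} [Fintype m] [DecidableEq m]
    (R : MvPolynomial ℕ ℂ) : Continuous fun A : Matrix m m ℂ => eval (recentredTrace A) R :=
  (MvPolynomial.continuous_eval R).comp continuous_recentredTrace

lemma continuous_tracePolynomialGradient {m : Type*} [Fintype m] [DecidableEq m]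
    (B : Matrix m m ℂ) (a : ℕ) (R : MvPolynomial ℕ ℂ) :
    Continuous (tracePolynomialGradient B a R) := by
  have := continuous_eval_recentredTrace (m := m)
  unfold tracePolynomialGradient
  fun_prop

lemma sum_trace_skew_single_mul_tracePolynomialGradient (M : USp n) (a : ℕ)
    (R : MvPolynomial ℕ ℂ) :
    ∑ x, ∑ y, ((single x y (1 : ℂ) - symplecticAdjoint (single x y 1)) *
        tracePolynomialGradient (single y x 1) a R (toMatrix M)).trace =
      eval (recentredTrace (toMatrix M)) (loopOperator a R) := by
  simp only [eval_loopOperator, ← sum_trace_skew_single_mul_sum_pow,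
    ← sum_trace_skew_single_mul_pow_mul_trace, tracePolynomialGradient, Matrix.mul_add,
    Matrix.mul_smul, trace_add, trace_smul, smul_eq_mul, sum_add_distrib, sum_mul, mul_sum]
  congr 1
  · exact sum_congr rfl fun x _ => sum_congr rfl fun y _ => mul_comm ..
  · rw [← sum_comm_cycle]
    simp only [trace_sum, trace_smul, smul_eq_mul, mul_sum]
    exact sum_congr rfl fun x _ => sum_congr rfl fun y _ => sum_congr rfl fun b _ => by ring

/-- The expectation of a polynomial in the recentred traces of a random matrix. -/
noncomputable def polynomialMean (μ : Measure (USp n)) [IsFiniteMeasure μ] :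
    MvPolynomial ℕ ℂ →ₗ[ℂ] ℂ where
  toFun R := ∫ M, eval (recentredTrace (toMatrix M)) R ∂μ
  map_add' R S := by
    simp only [map_add]
    exact integral_add (integrable_comp_toMatrix (continuous_eval_recentredTrace R))
      (integrable_comp_toMatrix (continuous_eval_recentredTrace S))
  map_smul' c R := by
    simp only [smul_eval, integral_const_mul, RingHom.id_apply, smul_eq_mul]

variable {μ : Measure (USp n)} [IsFiniteMeasure μ]

lemma polynomialMean_apply (R : MvPolynomial ℕ ℂ) :
    polynomialMean μ R = ∫ M, eval (recentredTrace (toMatrix M)) R ∂μ := rfl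

lemma polynomialMean_X_zero_mul (R : MvPolynomial ℕ ℂ) :
    polynomialMean μ (X 0 * R) = (2 * n + 1 : ℕ) * polynomialMean μ R := by
  simp [polynomialMean_apply, recentredTrace, evenIndicator, integral_const_mul, two_mul]

lemma polynomialMean_loopOperator [μ.IsMulLeftInvariant] (a : ℕ) (R : MvPolynomial ℕ ℂ) :
    polynomialMean μ (loopOperator a R) = 0 := by
  simp only [polynomialMean_apply, ← sum_trace_skew_single_mul_tracePolynomialGradient]
  have integrable_term : ∀ x y, Integrable (fun M =>
      ((single x y (1 : ℂ) - symplecticAdjoint (single x y 1)) *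
        tracePolynomialGradient (single y x 1) a R (toMatrix M)).trace) μ := fun x y => by
    have := continuous_tracePolynomialGradient (single y x 1) a R
    exact integrable_comp_toMatrix (μ := μ) (φ := fun A =>
      ((single x y (1 : ℂ) - symplecticAdjoint (single x y 1)) *
        tracePolynomialGradient (single y x 1) a R A).trace) (by fun_prop)
  rw [integral_finsetSum _ fun x _ => integrable_finsetSum _ fun y _ => integrable_term x y]
  refine sum_eq_zero fun x _ => ?_
  rw [integral_finsetSum _ fun y _ => integrable_term x y]
  refine sum_eq_zero fun y _ => integral_trace_mul_gradient_eq_zero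
    ((hasTraceGradient_trace_mul_pow (single y x 1) a).mul
      (hasTraceGradient_eval_recentredTrace R)) ?_ (continuous_tracePolynomialGradient _ a R) ?_
  · have := continuous_eval_recentredTrace (m := Fin n ⊕ Fin n) R
    fun_prop
  · rw [map_sub, symplecticAdjoint_symplecticAdjoint, neg_sub]

end HaarLoopEquations

section Moments

open MvPolynomial USp

variable {n k : ℕ} {μ : Measure (USp n)}

lemma polynomialMean_X_mul_monomial [IsFiniteMeasure μ] [μ.IsMulLeftInvariant] {a : ℕ}
    {s : ℕ →₀ ℕ} (hk : k ≤ 2 * n + 1) (hp : (a, s) ∈ steinIndices k) :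
    polynomialMean μ (X a * monomial s 1) = a * polynomialMean μ (pderiv a (monomial s 1)) :=
  sub_eq_zero.mp <| (steinDefect_apply a _).symm.trans <|
    steinDefect_monomial_eq_zero polynomialMean_loopOperator polynomialMean_X_zero_mul hk hp

lemma integral_recentredTrace [IsFiniteMeasure μ] [μ.IsMulLeftInvariant] (hk : 0 < k)
    (h : k ≤ 2 * n + 1) :
    ∫ M, recentredTrace (toMatrix M) k ∂μ = 0 := by
  have := polynomialMean_X_mul_monomial (μ := μ) (a := k) (s := 0) h ⟨hk, rfl, by simp⟩
  simpa [polynomialMean_apply] using this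

lemma integral_recentredTrace_sq [IsProbabilityMeasure μ] [μ.IsMulLeftInvariant]
    (hk : 0 < k) (h : k ≤ n) :
    ∫ M, recentredTrace (toMatrix M) k ^ 2 ∂μ = k := by
  have mem : (k, Finsupp.single k 1) ∈ steinIndices (2 * k) :=
    ⟨hk, Finsupp.single_eq_of_ne hk.ne, by simp [Finsupp.weight_single, two_mul]⟩
  have := polynomialMean_X_mul_monomial (μ := μ) (by omega) mem
  rw [← X] at this
  simpa [polynomialMean_apply, sq] using this

lemma integral_trUSp [IsProbabilityMeasure μ] [μ.IsMulLeftInvariant] (hk : 0 < k)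
    (h : k ≤ 2 * n + 1) :
    ∫ M, trUSp M k ∂μ = -evenIndicator k := by
  have integrable := integrable_comp_toMatrix (μ := μ) (φ := fun A => (A ^ k).trace) (by fun_prop)
  have mean := integral_recentredTrace (μ := μ) hk h
  simp only [recentredTrace] at mean
  rw [integral_add integrable (integrable_const _), integral_const, probReal_univ, one_smul] at mean
  simpa only [trUSp_natCast] using eq_neg_of_add_eq_zero_left mean

lemma variance_re_trUSp [IsProbabilityMeasure μ] [μ.IsMulLeftInvariant]
    (hk : 0 < k) (h : k ≤ n) :
    variance (fun M => (trUSp M k).re) μ = k := by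
  have aemeasurable_re : AEMeasurable (fun M : USp n => (trUSp M k).re) μ := by
    simp only [trUSp_natCast]
    have := isEmbedding_toMatrix (n := n).continuous
    exact Continuous.aemeasurable (by fun_prop)
  have mean_re : ((∫ M, (trUSp M k).re ∂μ : ℝ) : ℂ) = -evenIndicator k := by
    simp only [← integral_complex_ofReal, ofReal_re_trUSp]
    exact integral_trUSp hk (by omega)
  have variance_eq : (variance (fun M => (trUSp M k).re) μ : ℂ) =
      ∫ M, recentredTrace (toMatrix M) k ^ 2 ∂μ := by
    rw [variance_eq_integral aemeasurable_re, ← integral_complex_ofReal]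
    simp only [Complex.ofReal_pow, Complex.ofReal_sub, ofReal_re_trUSp, mean_re, sub_neg_eq_add,
      recentredTrace, ← trUSp_natCast]
  exact_mod_cast variance_eq.trans (integral_recentredTrace_sq hk h)

theorem usp_trace_2j_mean_variance_general (hk : 0 < k) (h : k ≤ n)
    (μ : Measure (USp n)) [IsProbabilityMeasure μ] [μ.IsMulLeftInvariant] :
    (∫ M, trUSp M k ∂μ = -evenIndicator k) ∧ variance (fun M => (trUSp M k).re) μ = k :=
  ⟨integral_trUSp hk (by omega), variance_re_trUSp hk h⟩

end Moments

/-- For Haar-distributed `M` in `USp(2n,ℂ)` and `4j ≤ 2n + 1`: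
`E[Tr(M^{2j})] = −1` and `Var(Tr(M^{2j})) = 2j` (the trace being real, its variance is
the variance of its real part). -/
theorem usp_trace_2j_mean_variance (n j : ℕ) (hn : 0 < n) (hj : 0 < j)
    (h : 4 * j ≤ 2 * n + 1)
    (μ : Measure (USp n)) [IsProbabilityMeasure μ] [μ.IsHaarMeasure] :
    (∫ M, trUSp M ((2 * j : ℕ) : ℤ) ∂μ = -1) ∧
      variance (fun M => (trUSp M ((2 * j : ℕ) : ℤ)).re) μ = 2 * j := by
  simpa [evenIndicator] using
    usp_trace_2j_mean_variance_general (k := 2 * j) (by omega) (by omega) μ
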